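/- Suppose smooth vector fields S, B, F, J : ℝ × ℝ³ → ℝ³ and smooth scalar fields W, η, ρ : ℝ × ℝ³ → ℝ are given, define E := ∇×S + F, and assume the reduced Hamiltonian system: ∂S/∂t = B, ∂W/∂t = −η, ∂B/∂t = −∇×(∇×S + F + ∇W), ∂η/∂t = −∇·E − ΔW, together with the external charge and current density conditions ∂F/∂t = −J, ∇·F = ρ, and ∇·B = 0. Then the full Maxwell equations hold on ℝ × ℝ³: ∂E/∂t = ∇×B − J, ∂B/∂t = −∇×E, ∇·E = ρ, ∇·B = 0; and moreover the scalar field W satisfies the inhomogeneous wave equation ∂²W/∂t² − ΔW = ρ. -/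

import Mathlib

open scoped BigOperators

/-- Spatial partial derivative `∂f/∂xᵢ` of a scalar field on `ℝ³`. -/
noncomputable def pd (f : (Fin 3 → ℝ) → ℝ) (i : Fin 3) (x : Fin 3 → ℝ) : ℝ :=
  deriv (fun y => f (Function.update x i y)) (x i)

/-- Spatial divergence `∇·V := Σᵢ ∂Vᵢ/∂xᵢ` of a vector field on `ℝ³`. -/
noncomputable def div3 (V : (Fin 3 → ℝ) → Fin 3 → ℝ) (x : Fin 3 → ℝ) : ℝ :=
  ∑ i, pd (fun y => V y i) i x

/-- Spatial curl `∇×V` of a vector field on `ℝ³`: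
`(∇×V)ᵢ = ∂V_{i+2}/∂x_{i+1} − ∂V_{i+1}/∂x_{i+2}` (cyclically, so
`(∇×V)₁ = ∂V₃/∂x₂ − ∂V₂/∂x₃`). -/
noncomputable def curl3 (V : (Fin 3 → ℝ) → Fin 3 → ℝ) (x : Fin 3 → ℝ) (i : Fin 3) : ℝ :=
  pd (fun y => V y (i + 2)) (i + 1) x - pd (fun y => V y (i + 1)) (i + 2) x

/-- Spatial gradient `∇f` of a scalar field on `ℝ³`. -/
noncomputable def grad3 (f : (Fin 3 → ℝ) → ℝ) (x : Fin 3 → ℝ) (i : Fin 3) : ℝ :=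
  pd f i x

/-- Spatial Laplacian `Δf := Σᵢ ∂²f/∂xᵢ²` of a scalar field on `ℝ³`. -/
noncomputable def lap3 (f : (Fin 3 → ℝ) → ℝ) (x : Fin 3 → ℝ) : ℝ :=
  ∑ i, pd (fun y => pd f i y) i x

/-- A time-dependent vector field on `ℝ × ℝ³` is smooth (jointly in `(t,x)`). -/
def SmoothV (V : ℝ → (Fin 3 → ℝ) → Fin 3 → ℝ) : Prop :=
  ContDiff ℝ (⊤ : ℕ∞) (fun p : ℝ × (Fin 3 → ℝ) => V p.1 p.2)

/-- A time-dependent scalar field on `ℝ × ℝ³` is smooth (jointly in `(t,x)`). -/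
def SmoothS (f : ℝ → (Fin 3 → ℝ) → ℝ) : Prop :=
  ContDiff ℝ (⊤ : ℕ∞) (fun p : ℝ × (Fin 3 → ℝ) => f p.1 p.2)

/-!
The curl of a gradient and the divergence of a curl vanish because mixed partial derivatives
commute. The first identity removes the gauge term `∇W` from the evolution equation of `B`, which
becomes Faraday's law; the second turns `∇·E` into `∇·F = ρ`, which is Gauss's law and makes the
equation for `η = -∂W/∂t` the wave equation with source `ρ`. Ampère's law is the time derivative of
`E = ∇×S + F`, the derivatives `∂/∂t` and `∇×` commuting for the same reason.
-/

open Function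

section DirectionalDerivatives

variable {𝕜 X Y : Type*} [NontriviallyNormedField 𝕜] [NormedAddCommGroup X] [NormedSpace 𝕜 X]
  [NormedAddCommGroup Y] [NormedSpace 𝕜 Y]

theorem differentiableAt_fderiv_apply {f : X → Y} {p : X} (hf : ContDiffAt 𝕜 2 f p) (v : X) :
    DifferentiableAt 𝕜 (fun q => fderiv 𝕜 f q v) p :=
  ((hf.fderiv_right (m := 1) (by norm_num)).differentiableAt (by norm_num)).clm_apply
    (differentiableAt_const v)

theorem fderiv_fderiv_apply_comm [IsRCLikeNormedField 𝕜] {f : X → Y} {p : X}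
    (hf : ContDiffAt 𝕜 2 f p) (v w : X) :
    fderiv 𝕜 (fun q => fderiv 𝕜 f q v) p w = fderiv 𝕜 (fun q => fderiv 𝕜 f q w) p v := by
  have hd : DifferentiableAt 𝕜 (fderiv 𝕜 f) p :=
    (hf.fderiv_right (m := 1) (by norm_num)).differentiableAt (by norm_num)
  have hsymm : IsSymmSndFDerivAt 𝕜 f p := hf.isSymmSndFDerivAt (by simp)
  simpa [fderiv_clm_apply hd (differentiableAt_const _)] using hsymm w v

variable {f : 𝕜 → X → Y}

theorem deriv_eq_fderiv_uncurry {t : 𝕜} {x : X} (hf : DifferentiableAt 𝕜 (uncurry f) (t, x)) :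
    deriv (fun s => f s x) t = fderiv 𝕜 (uncurry f) (t, x) (1, 0) :=
  (HasFDerivAt.comp_hasDerivAt (f := fun s => (s, x)) t hf.hasFDerivAt
    ((hasDerivAt_id t).prodMk (hasDerivAt_const t x))).deriv

theorem uncurry_deriv_eq_fderiv (hf : Differentiable 𝕜 (uncurry f)) :
    (uncurry fun t y => deriv (fun s => f s y) t) = fun p => fderiv 𝕜 (uncurry f) p (1, 0) :=
  funext fun p => deriv_eq_fderiv_uncurry (hf p)

theorem differentiable_uncurry_deriv (hf : ContDiff 𝕜 2 (uncurry f)) :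
    Differentiable 𝕜 (uncurry fun t y => deriv (fun s => f s y) t) := by
  rw [uncurry_deriv_eq_fderiv (hf.differentiable (by norm_num))]
  exact fun p => differentiableAt_fderiv_apply hf.contDiffAt _

end DirectionalDerivatives

section StaticFields

variable {f g : (Fin 3 → ℝ) → ℝ} {U V : (Fin 3 → ℝ) → Fin 3 → ℝ} {x : Fin 3 → ℝ}

theorem pd_eq_fderiv (hf : DifferentiableAt ℝ f x) (i : Fin 3) :
    pd f i x = fderiv ℝ f x (Pi.single i 1) := by
  have h : HasFDerivAt f (fderiv ℝ f x) (update x i (x i)) := by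
    simpa only [update_eq_self] using hf.hasFDerivAt
  exact (h.comp_hasDerivAt (x i) (hasDerivAt_update x i (x i))).deriv

theorem pd_add (hf : DifferentiableAt ℝ f x) (hg : DifferentiableAt ℝ g x) (i : Fin 3) :
    pd (f + g) i x = pd f i x + pd g i x := by
  rw [pd_eq_fderiv hf, pd_eq_fderiv hg, pd_eq_fderiv (hf.add hg), fderiv_add hf hg, add_apply]

theorem pd_sub (hf : DifferentiableAt ℝ f x) (hg : DifferentiableAt ℝ g x) (i : Fin 3) :
    pd (f - g) i x = pd f i x - pd g i x := by
  rw [pd_eq_fderiv hf, pd_eq_fderiv hg, pd_eq_fderiv (hf.sub hg), fderiv_sub hf hg, sub_apply]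

theorem pd_eq_fderiv_fun (hf : Differentiable ℝ f) (i : Fin 3) :
    pd f i = fun y => fderiv ℝ f y (Pi.single i 1) :=
  funext fun y => pd_eq_fderiv (hf y) i

theorem differentiable_pd (hf : ContDiff ℝ 2 f) (i : Fin 3) : Differentiable ℝ (pd f i) := by
  rw [pd_eq_fderiv_fun (hf.differentiable (by norm_num))]
  exact fun y => differentiableAt_fderiv_apply hf.contDiffAt _

theorem pd_pd_comm (hf : ContDiff ℝ 2 f) (i j : Fin 3) (x : Fin 3 → ℝ) :
    pd (pd f i) j x = pd (pd f j) i x := by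
  have hd : Differentiable ℝ f := hf.differentiable (by norm_num)
  rw [pd_eq_fderiv (differentiable_pd hf i x), pd_eq_fderiv (differentiable_pd hf j x),
    pd_eq_fderiv_fun hd, pd_eq_fderiv_fun hd, fderiv_fderiv_apply_comm hf.contDiffAt]

theorem differentiable_grad3 (hf : ContDiff ℝ 2 f) : Differentiable ℝ (grad3 f) :=
  differentiable_pi.2 (differentiable_pd hf)

theorem differentiable_curl3 (hV : ContDiff ℝ 2 V) : Differentiable ℝ (curl3 V) :=
  differentiable_pi.2 fun _ =>
    (differentiable_pd (contDiff_pi.1 hV _) _).sub (differentiable_pd (contDiff_pi.1 hV _) _)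

theorem div3_add (hU : DifferentiableAt ℝ U x) (hV : DifferentiableAt ℝ V x) :
    div3 (U + V) x = div3 U x + div3 V x := by
  rw [differentiableAt_pi] at hU hV
  exact (Finset.sum_congr rfl fun i _ => pd_add (hU i) (hV i) i).trans Finset.sum_add_distrib

theorem curl3_add (hU : DifferentiableAt ℝ U x) (hV : DifferentiableAt ℝ V x) :
    curl3 (U + V) x = curl3 U x + curl3 V x := by
  rw [differentiableAt_pi] at hU hV
  ext i
  exact (congrArg₂ (· - ·) (pd_add (hU _) (hV _) _) (pd_add (hU _) (hV _) _)).trans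
    (add_sub_add_comm _ _ _ _)

theorem curl3_grad3 (hf : ContDiff ℝ 2 f) (x : Fin 3 → ℝ) : curl3 (grad3 f) x = 0 :=
  funext fun i => sub_eq_zero.2 (pd_pd_comm hf (i + 2) (i + 1) x)

theorem div3_curl3 (hV : ContDiff ℝ 2 V) (x : Fin 3 → ℝ) : div3 (curl3 V) x = 0 := by
  have hV' : ∀ i, ContDiff ℝ 2 fun y => V y i := contDiff_pi.1 hV
  have h_expand (i : Fin 3) : pd (fun y => curl3 V y i) i x =
      pd (pd (fun y => V y (i + 2)) (i + 1)) i x - pd (pd (fun y => V y (i + 1)) (i + 2)) i x :=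
    pd_sub (differentiable_pd (hV' _) _ x) (differentiable_pd (hV' _) _ x) i
  simp only [div3, h_expand, Fin.sum_univ_three, Fin.isValue, Fin.reduceAdd]
  rw [pd_pd_comm (hV' 2) 1 0, pd_pd_comm (hV' 1) 2 0, pd_pd_comm (hV' 0) 2 1]
  ring

theorem curl3_add_grad3 (hV : DifferentiableAt ℝ V x) (hf : ContDiff ℝ 2 f) :
    curl3 (V + grad3 f) x = curl3 V x := by
  rw [curl3_add hV (differentiable_grad3 hf x), curl3_grad3 hf, add_zero]

theorem div3_curl3_add (hU : ContDiff ℝ 2 U) (hV : DifferentiableAt ℝ V x) :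
    div3 (curl3 U + V) x = div3 V x := by
  rw [div3_add (differentiable_curl3 hU x) hV, div3_curl3 hU, zero_add]

end StaticFields

section TimeDependentFields

variable {f : ℝ → (Fin 3 → ℝ) → ℝ} {U V : ℝ → (Fin 3 → ℝ) → Fin 3 → ℝ}

theorem pd_eq_fderiv_uncurry {t : ℝ} {x : Fin 3 → ℝ}
    (hf : DifferentiableAt ℝ (uncurry f) (t, x)) (i : Fin 3) :
    pd (f t) i x = fderiv ℝ (uncurry f) (t, x) (0, Pi.single i 1) := by
  have h : HasFDerivAt (f t) _ x := hf.hasFDerivAt.comp x (hasFDerivAt_prodMk_right t x)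
  simp [pd_eq_fderiv h.differentiableAt, h.fderiv]

theorem uncurry_pd_eq_fderiv (hf : Differentiable ℝ (uncurry f)) (i : Fin 3) :
    (uncurry fun t => pd (f t) i) = fun p => fderiv ℝ (uncurry f) p (0, Pi.single i 1) :=
  funext fun p => pd_eq_fderiv_uncurry (hf p) i

theorem differentiable_uncurry_pd (hf : ContDiff ℝ 2 (uncurry f)) (i : Fin 3) :
    Differentiable ℝ (uncurry fun t => pd (f t) i) := by
  rw [uncurry_pd_eq_fderiv (hf.differentiable (by norm_num))]
  exact fun p => differentiableAt_fderiv_apply hf.contDiffAt _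

theorem deriv_pd (hf : ContDiff ℝ 2 (uncurry f)) (t : ℝ) (x : Fin 3 → ℝ) (i : Fin 3) :
    deriv (fun s => pd (f s) i x) t = pd (fun y => deriv (fun s => f s y) t) i x := by
  have hd : Differentiable ℝ (uncurry f) := hf.differentiable (by norm_num)
  calc
    deriv (fun s => pd (f s) i x) t
        = fderiv ℝ (fun p => fderiv ℝ (uncurry f) p (0, Pi.single i 1)) (t, x) (1, 0) := by
      rw [deriv_eq_fderiv_uncurry (differentiable_uncurry_pd hf i (t, x)),
        uncurry_pd_eq_fderiv hd]
    _ = fderiv ℝ (fun p => fderiv ℝ (uncurry f) p (1, 0)) (t, x) (0, Pi.single i 1) :=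
      fderiv_fderiv_apply_comm hf.contDiffAt _ _
    _ = pd (fun y => deriv (fun s => f s y) t) i x := by
      rw [pd_eq_fderiv_uncurry (f := fun t y => deriv (fun s => f s y) t)
          (differentiable_uncurry_deriv hf (t, x)), uncurry_deriv_eq_fderiv hd]

theorem differentiable_pd_time (hf : ContDiff ℝ 2 (uncurry f)) (x : Fin 3 → ℝ) (i : Fin 3) :
    Differentiable ℝ fun s => pd (f s) i x :=
  (differentiable_uncurry_pd hf i).comp (differentiable_id.prodMk (differentiable_const x))

theorem differentiable_curl3_time (hV : ContDiff ℝ 2 (uncurry V)) (x : Fin 3 → ℝ) (i : Fin 3) :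
    Differentiable ℝ fun s => curl3 (V s) x i := by
  have hV' (j : Fin 3) : ContDiff ℝ 2 (uncurry fun s y => V s y j) := contDiff_pi.1 hV j
  exact (differentiable_pd_time (hV' _) x _).sub (differentiable_pd_time (hV' _) x _)

theorem deriv_curl3 (hV : ContDiff ℝ 2 (uncurry V)) (t : ℝ) (x : Fin 3 → ℝ) (i : Fin 3) :
    deriv (fun s => curl3 (V s) x i) t =
      curl3 (fun y j => deriv (fun s => V s y j) t) x i := by
  have hV' (j : Fin 3) : ContDiff ℝ 2 (uncurry fun s y => V s y j) := contDiff_pi.1 hV j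
  simp only [curl3]
  rw [deriv_fun_sub (differentiable_pd_time (hV' _) x _ t) (differentiable_pd_time (hV' _) x _ t),
    deriv_pd (hV' _), deriv_pd (hV' _)]

theorem deriv_curl3_add {t : ℝ} {x : Fin 3 → ℝ} {i : Fin 3} (hU : ContDiff ℝ 2 (uncurry U))
    (hV : DifferentiableAt ℝ (fun s => V s x i) t) :
    deriv (fun s => (curl3 (U s) + V s) x i) t =
      curl3 (fun y j => deriv (fun s => U s y j) t) x i + deriv (fun s => V s x i) t := by
  rw [← deriv_curl3 hU]
  exact deriv_fun_add (differentiable_curl3_time hU x i t) hV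

end TimeDependentFields

theorem reduced_hamiltonian_full_maxwell_general
    {S B F J E : ℝ → (Fin 3 → ℝ) → Fin 3 → ℝ} {W η ρ : ℝ → (Fin 3 → ℝ) → ℝ}
    (hS : ContDiff ℝ 2 (uncurry S)) (hF : Differentiable ℝ (uncurry F))
    (hW : ContDiff ℝ 2 (uncurry W))
    (hE : ∀ t x i, E t x i = curl3 (S t) x i + F t x i)
    (hdtS : ∀ t x i, deriv (fun s => S s x i) t = B t x i)
    (hdtW : ∀ t x, deriv (fun s => W s x) t = -η t x)
    (hdtB : ∀ t x i, deriv (fun s => B s x i) t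
      = -curl3 (fun y j => curl3 (S t) y j + F t y j + grad3 (W t) y j) x i)
    (hdtη : ∀ t x, deriv (fun s => η s x) t = -div3 (E t) x - lap3 (W t) x)
    (hdtF : ∀ t x i, deriv (fun s => F s x i) t = -J t x i)
    (hdivF : ∀ t x, div3 (F t) x = ρ t x)
    (hdivB : ∀ t x, div3 (B t) x = 0) :
    (∀ t x i, deriv (fun s => E s x i) t = curl3 (B t) x i - J t x i)
    ∧ (∀ t x i, deriv (fun s => B s x i) t = -curl3 (E t) x i)
    ∧ (∀ t x, div3 (E t) x = ρ t x)
    ∧ (∀ t x, div3 (B t) x = 0)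
    ∧ (∀ t x, deriv (fun s => deriv (fun s' => W s' x) s) t - lap3 (W t) x = ρ t x) := by
  obtain rfl : E = fun t => curl3 (S t) + F t := by ext t x i; exact hE t x i
  have hSt (t : ℝ) : ContDiff ℝ 2 (S t) := hS.comp (contDiff_prodMk_right t)
  have hFt (t : ℝ) : Differentiable ℝ (F t) :=
    hF.comp ((differentiable_const t).prodMk differentiable_id)
  have gauss (t : ℝ) (x : Fin 3 → ℝ) : div3 (curl3 (S t) + F t) x = ρ t x := by
    rw [div3_curl3_add (hSt t) (hFt t x), hdivF]
  refine ⟨fun t x i => ?ampere, fun t x i => ?faraday, gauss, hdivB, fun t x => ?wave⟩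
  case ampere =>
    have hFx : Differentiable ℝ fun s => F s x i := differentiable_pi.1
      (hF.comp (differentiable_id.prodMk (differentiable_const x))) i
    rw [deriv_curl3_add hS (hFx t), hdtF, ← sub_eq_add_neg]
    simp only [hdtS]
  case faraday =>
    have hEt : Differentiable ℝ (curl3 (S t) + F t) := (differentiable_curl3 (hSt t)).add (hFt t)
    have hWt : ContDiff ℝ 2 (W t) := hW.comp (contDiff_prodMk_right t)
    rw [hdtB, ← curl3_add_grad3 (hEt x) hWt]
    rfl
  case wave =>
    simp only [hdtW]
    rw [deriv.fun_neg, hdtη, gauss]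
    ring

/-- the reduced Hamiltonian system `∂S/∂t = B`, `∂W/∂t = −η`,
`∂B/∂t = −∇×(∇×S + F + ∇W)`, `∂η/∂t = −∇·E − ΔW` for `E := ∇×S + F`, together with the
external charge and current density conditions `∂F/∂t = −J`, `∇·F = ρ`, `∇·B = 0`, implies
the full Maxwell equations `∂E/∂t = ∇×B − J`, `∂B/∂t = −∇×E`, `∇·E = ρ`, `∇·B = 0`,
and the inhomogeneous wave equation `∂²W/∂t² − ΔW = ρ`. -/
theorem reduced_hamiltonian_full_maxwell
    (S B F J : ℝ → (Fin 3 → ℝ) → Fin 3 → ℝ) (W η ρ : ℝ → (Fin 3 → ℝ) → ℝ)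
    (hS : SmoothV S) (hBs : SmoothV B) (hFs : SmoothV F) (hJs : SmoothV J)
    (hWs : SmoothS W) (hηs : SmoothS η) (hρs : SmoothS ρ)
    (E : ℝ → (Fin 3 → ℝ) → Fin 3 → ℝ)
    (hE : ∀ t x i, E t x i = curl3 (S t) x i + F t x i)
    (h1 : ∀ t x i, deriv (fun s => S s x i) t = B t x i)
    (h2 : ∀ t x, deriv (fun s => W s x) t = - η t x)
    (h3 : ∀ t x i, deriv (fun s => B s x i) t
        = - curl3 (fun y j => curl3 (S t) y j + F t y j + grad3 (W t) y j) x i)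
    (h4 : ∀ t x, deriv (fun s => η s x) t = - div3 (E t) x - lap3 (W t) x)
    (hF : ∀ t x i, deriv (fun s => F s x i) t = - J t x i)
    (hdivF : ∀ t x, div3 (F t) x = ρ t x)
    (hdivB : ∀ t x, div3 (B t) x = 0) :
    (∀ t x i, deriv (fun s => E s x i) t = curl3 (B t) x i - J t x i)
    ∧ (∀ t x i, deriv (fun s => B s x i) t = - curl3 (E t) x i)
    ∧ (∀ t x, div3 (E t) x = ρ t x)
    ∧ (∀ t x, div3 (B t) x = 0)
    ∧ (∀ t x, deriv (fun s => deriv (fun s' => W s' x) s) t - lap3 (W t) x = ρ t x) := by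
  have two_le : (2 : WithTop ℕ∞) ≤ ((⊤ : ℕ∞) : WithTop ℕ∞) := WithTop.coe_le_coe.2 le_top
  exact reduced_hamiltonian_full_maxwell_general (hS.of_le two_le) (hFs.differentiable (by simp))
    (hWs.of_le two_le) hE h1 h2 h3 h4 hF hdivF hdivB
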